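/- arXiv:1704.03795 — 5 statements merged into one kernel-verified Lean document; each statement's English description precedes it below -/
import Mathlib

section
/- Let k ≥ 2 and M ≥ 2k+1 be integers and let d_1, …, d_k be integers with 2 ≤ d_1 ≤ … ≤ d_k and d_1 + ⋯ + d_k = M + k. Then ∑_{i=1}^{k-1} d_i(d_i+1)/2 + (d_k − 1)d_k/2 − k ≥ 2M − 2. -/
/-- Lemma 2.1 of the paper. Let `k ≥ 2`, `M ≥ 2k+1` be integers and let
`d 0 ≤ d 1 ≤ … ≤ d (k-1)` be integers with `2 ≤ d 0` and `∑ d i = M + k`.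
Then `∑_{i=1}^{k-1} d_i(d_i+1)/2 + (d_k-1)d_k/2 - k ≥ 2M - 2`
(indices shifted so that the paper's `d_i` is `d (i-1)`; the divisions are
exact integer divisions). -/
theorem stmt_0 (k : ℕ) (M : ℤ) (d : ℕ → ℤ)
    (hk : 2 ≤ k) (hM : 2 * (k : ℤ) + 1 ≤ M)
    (hd2 : 2 ≤ d 0)
    (hmono : ∀ i j : ℕ, i ≤ j → j < k → d i ≤ d j)
    (hsum : ∑ i ∈ Finset.range k, d i = M + k) :
    (∑ i ∈ Finset.range (k - 1), d i * (d i + 1) / 2)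
      + (d (k - 1) - 1) * d (k - 1) / 2 - k ≥ 2 * M - 2 := by
  obtain ⟨n, rfl⟩ : ∃ n, k = n + 1 := ⟨k - 1, by omega⟩
  simp only [Nat.add_sub_cancel]
  rw [Finset.sum_range_succ] at hsum
  have h1 : ∑ i ∈ Finset.range n, (2 * d i - 1) ≤
      ∑ i ∈ Finset.range n, d i * (d i + 1) / 2 := by
    apply Finset.sum_le_sum
    intro i hi
    have hi' := Finset.mem_range.mp hi
    have h := hmono 0 i (Nat.zero_le _) (by omega)
    rw [Int.le_ediv_iff_mul_le (by norm_num)]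
    nlinarith
  have h2 : 2 * d n - 3 ≤ (d n - 1) * d n / 2 := by
    rw [Int.le_ediv_iff_mul_le (by norm_num)]
    rcases le_or_gt (d n) 2 with h | h
    · nlinarith
    · nlinarith
  rw [Finset.sum_sub_distrib, ← Finset.mul_sum] at h1
  simp only [Finset.sum_const, Finset.card_range, nsmul_eq_mul, mul_one] at h1
  push_cast at *
  linarith
end

section
/- For every real ε > 0 there exist integers k ≥ 2, M ≥ 2k+1, and integers d_1, …, d_k, ξ_1, …, ξ_k with 2 ≤ d_1 ≤ … ≤ d_k, d_1 + ⋯ + d_k = M + k, and 1 ≤ ξ_i ≤ d_i for each i, satisfying both conditions ∑_{i=1}^k [(d_i+1)(d_i+2) − ξ_i(ξ_i+1)] ≥ 4M + 2d_k + 2c_* − 2k (where c_* is the number of indices i with ξ_i = d_i) and M ≥ 3 + ∑_{i : ξ_i ≥ 2} (ξ_i + 1), such that (ξ_1 ⋯ ξ_k)/(d_1 ⋯ d_k) > 1 − ε. -/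
/-- Remark 0.1 of the paper: among tuples `(k, M, d, ξ)` satisfying all the
standing assumptions together with conditions (1) and (2) of the paper, the
ratio `μ/d = (ξ_1⋯ξ_k)/(d_1⋯d_k)` can be made arbitrarily close to `1`. -/
theorem stmt_4 (ε : ℝ) (hε : 0 < ε) :
    ∃ (k M : ℕ) (d ξ : ℕ → ℕ),
      2 ≤ k ∧ 2 * k + 1 ≤ M ∧
      2 ≤ d 0 ∧
      (∀ i j : ℕ, i ≤ j → j < k → d i ≤ d j) ∧
      (∑ i ∈ Finset.range k, d i = M + k) ∧
      (∀ i < k, 1 ≤ ξ i ∧ ξ i ≤ d i) ∧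
      (∑ i ∈ Finset.range k,
          (((d i : ℤ) + 1) * ((d i : ℤ) + 2) - (ξ i : ℤ) * ((ξ i : ℤ) + 1))) ≥
        4 * (M : ℤ) + 2 * (d (k - 1) : ℤ)
          + 2 * (((Finset.range k).filter fun i => ξ i = d i).card : ℤ)
          - 2 * (k : ℤ) ∧
      (M : ℤ) ≥ 3 + ∑ i ∈ (Finset.range k).filter (fun i => 2 ≤ ξ i),
          ((ξ i : ℤ) + 1) ∧
      (∏ i ∈ Finset.range k, (ξ i : ℝ)) / (∏ i ∈ Finset.range k, (d i : ℝ))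
        > 1 - ε := by
  obtain ⟨m, hm⟩ := exists_nat_gt (8 / ε)
  have hm0 : (0 : ℝ) < m := lt_trans (by positivity) hm
  have hmpos : 0 < m := by exact_mod_cast hm0
  have hme : 8 < m * ε := by rwa [div_lt_iff₀ hε] at hm
  refine ⟨2, 2 * m + 6, fun _ => m + 4, fun _ => m, le_refl _, by omega, by dsimp only; omega,
    fun _ _ _ _ => le_refl _, ?_, fun _ _ => ⟨hmpos, by dsimp only; omega⟩, ?_, ?_, ?_⟩
  · simp; ring
  · have h : ¬ (m = m + 4) := by omega
    simp only [Finset.sum_range_succ, Finset.sum_range_zero, h, Finset.filter_false,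
      Finset.card_empty]
    push_cast
    nlinarith
  · have h := Finset.sum_le_sum_of_subset_of_nonneg
      (Finset.filter_subset (fun _ : ℕ => 2 ≤ m) (Finset.range 2))
      (f := fun _ => (m : ℤ) + 1) (fun _ _ _ => by positivity)
    simp only [Finset.sum_range_succ, Finset.sum_range_zero] at h
    push_cast
    linarith
  · simp only [Finset.prod_range_succ, Finset.prod_range_zero, one_mul]
    push_cast
    rw [gt_iff_lt, lt_div_iff₀ (by positivity)]
    nlinarith [mul_pos hm0 hε, mul_lt_mul_of_pos_right hme (by linarith : (0:ℝ) < m + 4)]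
end

section
/- Let F be a field, let ξ and d be integers with 0 ≤ ξ ≤ d, and let x_{j,α} ∈ F be given for all pairs of integers (j,α) with ξ ≤ j ≤ d and 0 ≤ α ≤ j. Suppose that for every pair of integers (e,α) with 0 ≤ α ≤ e ≤ d one has ∑_{j=max(ξ,e)}^{d} binom(j−α, e−α) · x_{j,α} = 0. Then x_{j,α} = 0 for all ξ ≤ j ≤ d and 0 ≤ α ≤ j. -/
/-- The triangular elimination in the proof of Lemma 2.2. Let `F` be a field,
`0 ≤ ξ ≤ d` integers, and `x j α ∈ F` given for `ξ ≤ j ≤ d`, `0 ≤ α ≤ j`.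
If for every pair `(e,α)` with `0 ≤ α ≤ e ≤ d` one has
`∑_{j = max ξ e}^{d} C(j-α, e-α) · x j α = 0`, then all the `x j α`
(with `ξ ≤ j ≤ d`, `0 ≤ α ≤ j`) vanish. -/
theorem stmt_8 (F : Type*) [Field F] (ξ d : ℕ) (hξd : ξ ≤ d)
    (x : ℕ → ℕ → F)
    (h : ∀ e α : ℕ, α ≤ e → e ≤ d →
      ∑ j ∈ Finset.Icc (max ξ e) d, ((j - α).choose (e - α) : F) * x j α = 0) :
    ∀ j α : ℕ, ξ ≤ j → j ≤ d → α ≤ j → x j α = 0 := by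
  intro j α h1 h2 h3
  induction hn : d - j using Nat.strong_induction_on generalizing j with
  | _ n ih =>
    have hs := h j α h3 h2
    rw [max_eq_right h1, Finset.sum_eq_single_of_mem j (Finset.mem_Icc.mpr ⟨le_rfl, h2⟩)] at hs
    · simpa using hs
    · intro b hb hne
      rw [Finset.mem_Icc] at hb
      rw [ih (d - b) (by omega) b (by omega) hb.2 (by omega) rfl, mul_zero]
end

section
/- Let n ≥ 2 and 1 ≤ ξ ≤ d be integers, and for each pair (j,α) with ξ ≤ j ≤ d and 0 ≤ α ≤ j let q_{j,α} ∈ ℂ[z_2, …, z_n] be homogeneous of degree α (a constant when α = 0). For 0 ≤ e ≤ d define Φ_e ∈ ℂ[u_1, z_2, …, z_n] by Φ_e = ∑_{α=0}^{e} u_1^{e−α} ∑_{j=max(ξ,e)}^{d} binom(j−α, e−α) q_{j,α}. Let λ ∈ ℂ^{n−1}. Then the following are equivalent: (a) Φ_e(t, s·λ) = 0 for all t, s ∈ ℂ and all 0 ≤ e ≤ d; (b) q_{j,α}(λ) = 0 for all ξ ≤ j ≤ d and 0 ≤ α ≤ j. -/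
open MvPolynomial

/-- Lemma 2.2 of the paper. Let `n ≥ 2`, `1 ≤ ξ ≤ d`, and for `ξ ≤ j ≤ d`,
`0 ≤ α ≤ j` let `q_{j,α} ∈ ℂ[z_2,…,z_n]` be homogeneous of degree `α`
(the variables `z_2,…,z_n` are indexed by `{i : Fin n // i ≠ 0}`). For
`0 ≤ e ≤ d` let
`Φ_e = ∑_{α=0}^e u_1^{e-α} ∑_{j=max(ξ,e)}^d C(j-α, e-α) q_{j,α}`
(a polynomial in `u_1 = X 0` and `z_2,…,z_n`), and let `λ ∈ ℂ^{n-1}`. Then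
all `Φ_e` vanish identically on the line through `(1,0)` and `(0,λ)`
(i.e. `Φ_e(t, s·λ) = 0` for all `t,s ∈ ℂ` and `0 ≤ e ≤ d`) if and only if
`q_{j,α}(λ) = 0` for all `ξ ≤ j ≤ d`, `0 ≤ α ≤ j`. -/
theorem stmt_11 (n : ℕ) [NeZero n] (hn : 2 ≤ n) (ξ d : ℕ) (hξ : 1 ≤ ξ) (hξd : ξ ≤ d)
    (Q : ℕ → ℕ → MvPolynomial {i : Fin n // i ≠ 0} ℂ)
    (hQ : ∀ j α : ℕ, ξ ≤ j → j ≤ d → α ≤ j → (Q j α).IsHomogeneous α)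
    (Φ : ℕ → MvPolynomial (Fin n) ℂ)
    (hΦ : ∀ e : ℕ, e ≤ d → Φ e =
      ∑ α ∈ Finset.range (e + 1), (X (0 : Fin n)) ^ (e - α) *
        ∑ j ∈ Finset.Icc (max ξ e) d,
          C (((j - α).choose (e - α) : ℂ)) * rename Subtype.val (Q j α))
    (lam : {i : Fin n // i ≠ 0} → ℂ) :
    (∀ t s : ℂ, ∀ e : ℕ, e ≤ d →
        eval (fun i : Fin n => if h : i = 0 then t else s * lam ⟨i, h⟩) (Φ e) = 0)
      ↔ (∀ j α : ℕ, ξ ≤ j → j ≤ d → α ≤ j → eval lam (Q j α) = 0) := by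
  have hpt : ∀ s : ℂ, ∀ j α : ℕ, ξ ≤ j → j ≤ d → α ≤ j →
      eval (fun i => s * lam i) (Q j α) = s ^ α * eval lam (Q j α) := by
    intro s j α h1 h2 h3
    have hh := hQ j α h1 h2 h3
    rw [eval_eq, eval_eq, Finset.mul_sum]
    refine Finset.sum_congr rfl fun m hm => ?_
    have hd : ∑ i ∈ m.support, m i = α := by
      have h := hh (mem_support_iff.mp hm)
      rw [Finsupp.weight_apply] at h
      simpa [Finsupp.sum] using h
    simp only [mul_pow, Finset.prod_mul_distrib, Finset.prod_pow_eq_pow_sum, hd]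
    ring
  have hev : ∀ t s : ℂ, ∀ e ≤ d,
      eval (fun i : Fin n => if h : i = 0 then t else s * lam ⟨i, h⟩) (Φ e) =
      ∑ α ∈ Finset.range (e + 1), t ^ (e - α) * (s ^ α *
        ∑ j ∈ Finset.Icc (max ξ e) d, ((j - α).choose (e - α) : ℂ) * eval lam (Q j α)) := by
    intro t s e he
    rw [hΦ e he, map_sum]
    refine Finset.sum_congr rfl fun α hα => ?_
    rw [map_mul, map_pow, eval_X, map_sum]
    simp only [dif_pos]
    congr 1
    rw [Finset.mul_sum]
    refine Finset.sum_congr rfl fun j hj => ?_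
    rw [Finset.mem_Icc] at hj
    rw [Finset.mem_range] at hα
    have h1 := hpt s j α (le_trans (le_max_left _ _) hj.1) hj.2
      (by have := le_trans (le_max_right ξ e) hj.1; omega)
    have h2 : ((fun i : Fin n => if h : i = 0 then t else s * lam ⟨i, h⟩) ∘
        (Subtype.val : {i : Fin n // i ≠ 0} → Fin n)) = fun i => s * lam i := by
      funext i
      simp [i.2]
    rw [map_mul, eval_C, eval_rename, h2, h1]
    ring
  constructor
  · intro H
    have hS : ∀ e ≤ d, ∀ α ≤ e,
        ∑ j ∈ Finset.Icc (max ξ e) d, ((j - α).choose (e - α) : ℂ) * eval lam (Q j α) = 0 := by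
      intro e he α hα
      set c : ℕ → ℂ := fun α =>
        ∑ j ∈ Finset.Icc (max ξ e) d, ((j - α).choose (e - α) : ℂ) * eval lam (Q j α) with hc
      have hp : (∑ a ∈ Finset.range (e + 1),
          Polynomial.C (c a) * Polynomial.X ^ (e - a) : Polynomial ℂ) = 0 := by
        apply Polynomial.funext
        intro t
        have h := H t 1 e he
        rw [hev t 1 e he] at h
        rw [Polynomial.eval_finsetSum, Polynomial.eval_zero, ← h]
        refine Finset.sum_congr rfl fun a _ => ?_
        rw [Polynomial.eval_mul, Polynomial.eval_C, Polynomial.eval_pow, Polynomial.eval_X,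
          one_pow, one_mul, mul_comm]
      have h2 := congrArg (fun p => Polynomial.coeff p (e - α)) hp
      simp only [Polynomial.finsetSum_coeff, Polynomial.coeff_C_mul_X_pow,
        Polynomial.coeff_zero] at h2
      rw [Finset.sum_eq_single α] at h2
      · simpa using h2
      · intro b hb hne
        rw [Finset.mem_range] at hb
        rw [if_neg (by omega)]
      · intro h
        exact absurd (Finset.mem_range.mpr (by omega)) h
    intro j α
    induction hk : d - j using Nat.strong_induction_on generalizing j with
    | _ k ih =>
      intro h1 h2 h3
      have h := hS j h2 α h3
      rw [max_eq_right h1, Finset.sum_eq_single j] at h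
      · simpa using h
      · intro b hb hne
        rw [Finset.mem_Icc] at hb
        rw [ih (d - b) (by omega) b rfl (by omega) hb.2 (by omega), mul_zero]
      · intro h
        exact absurd (Finset.mem_Icc.mpr ⟨le_rfl, h2⟩) h
  · intro H t s e he
    rw [hev t s e he]
    refine Finset.sum_eq_zero fun α hα => ?_
    rw [Finset.sum_eq_zero, mul_zero, mul_zero]
    intro j hj
    rw [Finset.mem_Icc] at hj
    rw [Finset.mem_range] at hα
    rw [H j α (le_trans (le_max_left _ _) hj.1) hj.2
      (by have := le_trans (le_max_right ξ e) hj.1; omega), mul_zero]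
end

section
/- Let n ≥ 2 and 1 ≤ ξ ≤ d be integers and let λ ∈ ℂ^{n−1} be nonzero. Consider the finite-dimensional ℂ-vector space W of all tuples (q_{j,α}), indexed by pairs (j,α) with ξ ≤ j ≤ d and 0 ≤ α ≤ j, where q_{j,α} ∈ ℂ[z_2, …, z_n] is homogeneous of degree α (a constant when α = 0). For 0 ≤ e ≤ d define Φ_e = ∑_{α=0}^{e} u_1^{e−α} ∑_{j=max(ξ,e)}^{d} binom(j−α, e−α) q_{j,α} ∈ ℂ[u_1, z_2, …, z_n]. Then the set of tuples in W such that Φ_e(t, s·λ) = 0 for all t, s ∈ ℂ and all 0 ≤ e ≤ d is a linear subspace of W of codimension (1/2)·[(d+1)(d+2) − ξ(ξ+1)]. -/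
open MvPolynomial

/-- The index set of the pairs `(j,α)` with `ξ ≤ j ≤ d`, `0 ≤ α ≤ j`. -/
abbrev IdxSet (ξ d : ℕ) : Type :=
  {p : ℕ × ℕ // ξ ≤ p.1 ∧ p.1 ≤ d ∧ p.2 ≤ p.1}

/-- The space `W` of tuples `(q_{j,α})`, `ξ ≤ j ≤ d`, `0 ≤ α ≤ j`, where
`q_{j,α} ∈ ℂ[z_2,…,z_n]` is homogeneous of degree `α` (variables indexed by
`{i : Fin n // i ≠ 0}`). -/
abbrev TupleSpace (n ξ d : ℕ) [NeZero n] : Type :=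
  Π p : IdxSet ξ d,
    homogeneousSubmodule {i : Fin n // i ≠ 0} ℂ p.1.2

/-- The polynomial `Φ_e = ∑_{α=0}^e u_1^{e-α} ∑_{j=max(ξ,e)}^d C(j-α,e-α) q_{j,α}`
associated to a tuple `q ∈ W` (here `u_1 = X 0`). -/
noncomputable def PhiPoly (n ξ d : ℕ) [NeZero n] (q : TupleSpace n ξ d) (e : ℕ) :
    MvPolynomial (Fin n) ℂ :=
  ∑ α ∈ Finset.range (e + 1), (X (0 : Fin n)) ^ (e - α) *
    ∑ j ∈ Finset.Icc (max ξ e) d,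
      C (((j - α).choose (e - α) : ℂ)) *
        rename Subtype.val
          (if h : ξ ≤ j ∧ j ≤ d ∧ α ≤ j then
            ((q ⟨(j, α), h⟩ : homogeneousSubmodule {i : Fin n // i ≠ 0} ℂ α) :
              MvPolynomial {i : Fin n // i ≠ 0} ℂ)
          else 0)

lemma hom_eval_smul {σ : Type*} (p : MvPolynomial σ ℂ) (k : ℕ) (hp : p.IsHomogeneous k)
    (s : ℂ) (x : σ → ℂ) : eval (fun i => s * x i) p = s ^ k * eval x p := by
  rw [eval_eq, eval_eq, Finset.mul_sum]
  refine Finset.sum_congr rfl fun m hm => ?_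
  have h := hp (mem_support_iff.mp hm)
  simp only [mul_pow, Finset.prod_mul_distrib, Finset.prod_pow_eq_pow_sum]
  have h2 : ∑ i ∈ m.support, m i = k := by
    rw [← h, Finsupp.weight_apply, Finsupp.sum]
    simp
  rw [h2]; ring

/-- The value `q_{j,α}(λ)`, extended by zero. -/
noncomputable def cval (n ξ d : ℕ) [NeZero n] (lam : {i : Fin n // i ≠ 0} → ℂ)
    (q : TupleSpace n ξ d) (j α : ℕ) : ℂ :=
  if h : ξ ≤ j ∧ j ≤ d ∧ α ≤ j then
    eval lam ((q ⟨(j, α), h⟩ : homogeneousSubmodule {i : Fin n // i ≠ 0} ℂ α) :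
              MvPolynomial {i : Fin n // i ≠ 0} ℂ) else 0

lemma eval_Phi (n ξ d : ℕ) [NeZero n] (lam : {i : Fin n // i ≠ 0} → ℂ)
    (q : TupleSpace n ξ d) (e : ℕ) (t s : ℂ) :
    eval (fun i : Fin n => if h : i = 0 then t else s * lam ⟨i, h⟩) (PhiPoly n ξ d q e) =
      ∑ α ∈ Finset.range (e + 1), t ^ (e - α) * (s ^ α *
        ∑ j ∈ Finset.Icc (max ξ e) d, ((j - α).choose (e - α) : ℂ) * cval n ξ d lam q j α) := by
  unfold PhiPoly
  rw [map_sum]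
  refine Finset.sum_congr rfl fun α _ => ?_
  rw [map_mul, map_pow, eval_X, map_sum]
  simp only [dite_true]
  congr 1
  rw [Finset.mul_sum]
  refine Finset.sum_congr rfl fun j _ => ?_
  rw [map_mul, eval_C, eval_rename]
  have hf : ((fun i : Fin n => if h : i = 0 then t else s * lam ⟨i, h⟩) ∘
      (Subtype.val : {i : Fin n // i ≠ 0} → Fin n)) = fun i => s * lam i := by
    funext i
    simp [i.2]
  rw [hf]
  unfold cval
  split_ifs with h
  · rw [hom_eval_smul _ α ((mem_homogeneousSubmodule _ _).1 (q ⟨(j, α), h⟩).2)]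
    ring
  · simp

/-- The evaluation map. -/
noncomputable def evMap (n ξ d : ℕ) [NeZero n] (lam : {i : Fin n // i ≠ 0} → ℂ) :
    TupleSpace n ξ d →ₗ[ℂ] (IdxSet ξ d → ℂ) where
  toFun q := fun p => eval lam (q p : MvPolynomial {i : Fin n // i ≠ 0} ℂ)
  map_add' a b := by funext p; simp
  map_smul' c a := by funext p; simp

lemma evMap_surj (n ξ d : ℕ) [NeZero n] (lam : {i : Fin n // i ≠ 0} → ℂ) (hlam : lam ≠ 0) :
    Function.Surjective (evMap n ξ d lam) := by
  obtain ⟨i, hi⟩ := Function.ne_iff.1 hlam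
  intro c
  refine ⟨fun p => ⟨C (c p / lam i ^ p.1.2) * X i ^ p.1.2, ?_⟩, ?_⟩
  · rw [mem_homogeneousSubmodule]
    exact isHomogeneous_C_mul_X_pow _ _ _
  · funext p
    have : lam i ^ p.1.2 ≠ 0 := pow_ne_zero _ hi
    simp [evMap, this]

lemma coeffs_zero (e : ℕ) (a : ℕ → ℂ)
    (h : ∀ t : ℂ, ∑ α ∈ Finset.range (e + 1), t ^ (e - α) * a α = 0) (α : ℕ) (hα : α ≤ e) :
    a α = 0 := by
  have hp : (∑ α ∈ Finset.range (e + 1), Polynomial.monomial (e - α) (a α)) = 0 := by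
    apply Polynomial.funext
    intro t
    rw [Polynomial.eval_finsetSum, Polynomial.eval_zero, ← h t]
    refine Finset.sum_congr rfl fun α _ => ?_
    rw [Polynomial.eval_monomial, mul_comm]
  have hc := congrArg (fun p => Polynomial.coeff p (e - α)) hp
  simp only [Polynomial.finsetSum_coeff, Polynomial.coeff_monomial, Polynomial.coeff_zero] at hc
  rw [Finset.sum_eq_single α] at hc
  · simpa using hc
  · intro b hb hne
    rw [if_neg]
    simp at hb
    omega
  · intro hb
    simp at hb
    omega

lemma cval_zero (n ξ d : ℕ) [NeZero n] (lam : {i : Fin n // i ≠ 0} → ℂ)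
    (q : TupleSpace n ξ d)
    (H : ∀ e α, e ≤ d → α ≤ e → ∑ j ∈ Finset.Icc (max ξ e) d,
      ((j - α).choose (e - α) : ℂ) * cval n ξ d lam q j α = 0) (α : ℕ) :
    ∀ k j, d - j ≤ k → cval n ξ d lam q j α = 0 := by
  intro k
  induction k using Nat.strong_induction_on with
  | _ k ih =>
    intro j hj
    by_cases h : ξ ≤ j ∧ j ≤ d ∧ α ≤ j
    · have h1 := H j α h.2.1 h.2.2
      rw [Finset.sum_eq_single j] at h1
      · simpa using h1
      · intro b hb hne
        simp at hb
        rw [ih (d - b) (by omega) b le_rfl, mul_zero]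
      · intro hb
        simp at hb
        omega
    · unfold cval
      rw [dif_neg h]

lemma card_idx (ξ d : ℕ) (h : ξ ≤ d) :
    Nat.card (IdxSet ξ d) = ((d + 1) * (d + 2) - ξ * (ξ + 1)) / 2 ∧ Finite (IdxSet ξ d) := by
  let e : IdxSet ξ d ≃ ((Finset.Icc ξ d).sigma fun j => Finset.range (j + 1)) :=
    { toFun := fun p => ⟨⟨p.1.1, p.1.2⟩, by
        have := p.2
        simp only [Finset.mem_sigma, Finset.mem_Icc, Finset.mem_range]; omega⟩
      invFun := fun p => ⟨(p.1.1, p.1.2), by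
        have := p.2
        simp only [Finset.mem_sigma, Finset.mem_Icc, Finset.mem_range] at this
        dsimp only; omega⟩
      left_inv := fun p => rfl
      right_inv := fun p => rfl }
  refine ⟨?_, Finite.of_equiv _ e.symm⟩
  rw [Nat.card_congr e, Nat.card_eq_fintype_card, Fintype.card_coe, Finset.card_sigma]
  simp only [Finset.card_range]
  have key : 2 * ∑ j ∈ Finset.Icc ξ d, (j + 1) + ξ * (ξ + 1) = (d + 1) * (d + 2) := by
    clear e
    induction d, h using Nat.le_induction with
    | base => simp; ring
    | succ m hm ih =>
      rw [Finset.sum_Icc_succ_top (by omega)]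
      linarith
  omega

/-- The codimension count used in the proof of Lemma 2.3 of the paper:
for `n ≥ 2`, `1 ≤ ξ ≤ d` and a nonzero `λ ∈ ℂ^{n-1}`, the set of tuples
`(q_{j,α}) ∈ W` such that every `Φ_e`, `0 ≤ e ≤ d`, vanishes identically on the
line through `(1,0)` and `(0,λ)` is a linear subspace of `W` of codimension
`((d+1)(d+2) - ξ(ξ+1))/2`. -/
theorem stmt_12 (n : ℕ) [NeZero n] (hn : 2 ≤ n) (ξ d : ℕ) (hξ : 1 ≤ ξ) (hξd : ξ ≤ d)
    (lam : {i : Fin n // i ≠ 0} → ℂ) (hlam : lam ≠ 0) :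
    ∃ S : Submodule ℂ (TupleSpace n ξ d),
      (∀ q : TupleSpace n ξ d,
        q ∈ S ↔ ∀ t s : ℂ, ∀ e : ℕ, e ≤ d →
          eval (fun i : Fin n => if h : i = 0 then t else s * lam ⟨i, h⟩)
            (PhiPoly n ξ d q e) = 0) ∧
      Module.finrank ℂ (TupleSpace n ξ d ⧸ S) =
        ((d + 1) * (d + 2) - ξ * (ξ + 1)) / 2 := by
  obtain ⟨hcard, hfin⟩ := card_idx ξ d hξd
  haveI := Fintype.ofFinite (IdxSet ξ d)
  refine ⟨LinearMap.ker (evMap n ξ d lam), ?_, ?_⟩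
  · intro q
    simp only [eval_Phi]
    rw [LinearMap.mem_ker]
    constructor
    · intro hq t s e he
      have hz : ∀ j α, cval n ξ d lam q j α = 0 := by
        intro j α
        unfold cval
        split_ifs with h
        · exact congrFun hq ⟨(j, α), h⟩
        · rfl
      simp [hz]
    · intro H
      funext p
      have h0 := cval_zero n ξ d lam q (fun e α he hα => by
        refine coeffs_zero e (fun α => ∑ j ∈ Finset.Icc (max ξ e) d,
          ((j - α).choose (e - α) : ℂ) * cval n ξ d lam q j α) (fun t => ?_) α hα
        simpa using H t 1 e he) p.1.2 _ p.1.1 le_rfl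
      unfold cval at h0
      rw [dif_pos p.2] at h0
      exact h0
  · rw [((evMap n ξ d lam).quotKerEquivOfSurjective
      (evMap_surj n ξ d lam hlam)).finrank_eq, Module.finrank_fintype_fun_eq_card,
      ← Nat.card_eq_fintype_card, hcard]
end
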